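/- Let n ≥ 2 and let 𝒜 be a malnormal subgroup system of F_n. Then 𝒜 is proper at infinity: for every nontrivial g ∈ F_n, there exists a subgroup A of F_n with [A] ∈ 𝒜 and g^{+∞} ∈ ∂A if and only if there exists a subgroup A of F_n with [A] ∈ 𝒜 and g ∈ A. In particular, a nontrivial g ∈ F_n is 𝒜-peripheral if and only if g^{+∞} ∈ ∂A for some subgroup A with [A] ∈ 𝒜. -/

import Mathlib

/-!
The proof rests on quasiconvexity of finitely generated subgroups of `F n`.

If `B` is generated by a finite set, every vertex on a geodesic of the Cayley tree from `1` to
a point of `B` lies in `B * V` for a fixed finite set `V`, namely the set of prefixes of the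
generators and their inverses (`exists_finite_quasiconvex`). Write `g = h c h⁻¹` with `c`
cyclically reduced. The vertices `h c ^ k = g ^ k h` lie on the ray from `1` to `g^{+∞}`, so if
`g^{+∞} ∈ ∂B` they all lie in `B * V`. By the pigeonhole principle two of them lie in the same
`B * v`, which gives `g ^ k ∈ B` for some `k > 0` (`exists_pow_mem`). For malnormal `B`, the
element `g ^ k ≠ 1` lies in both `B` and `g B g⁻¹`, so `g ∈ B`
(`Malnormal.mem_of_pow_mem`).

Conversely, if `g ∈ B` then the powers of `g` lie in `B` and show `g^{+∞} ∈ ∂B`; the content of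
this direction is the existence of `g^{+∞}` as an infinite reduced word (`exists_isPosLimit`).
-/

open scoped Classical
open MeasureTheory

noncomputable section

namespace RelCurr

/-- The alphabet `𝔄 = ℬ ∪ ℬ⁻¹`: a letter is a generator together with a sign. -/
abbrev Letter (n : ℕ) := Fin n × Bool

/-- The inverse of a letter. -/
def linv {n : ℕ} (x : Letter n) : Letter n := (x.1, !x.2)

/-- The free group of rank `n` on the basis `Fin n`. -/
abbrev F (n : ℕ) := FreeGroup (Fin n)

/-- The reduced word of an element of `F n`. -/
def rword {n : ℕ} (g : F n) : List (Letter n) := FreeGroup.toWord g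

/-- The length `|g|` of the reduced word of `g`. -/
def wlen {n : ℕ} (g : F n) : ℕ := (rword g).length

/-- The single-letter element of `F n` given by a letter. -/
def letterE {n : ℕ} (b : Letter n) : F n := FreeGroup.mk [b]

/-- The conjugate subgroup `g A g⁻¹`. -/
def conjSub {n : ℕ} (g : F n) (A : Subgroup (F n)) : Subgroup (F n) :=
  Subgroup.map (MulAut.conj g).toMonoidHom A

/-- A subgroup `A` is malnormal if `xAx⁻¹ ∩ A = {1}` for every `x ∉ A`. -/
def Malnormal {n : ℕ} (A : Subgroup (F n)) : Prop :=
  ∀ x : F n, x ∉ A → conjSub x A ⊓ A = ⊥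

/-- The word metric on the Cayley tree `T`. -/
def dist' {n : ℕ} (x y : F n) : ℕ := wlen (x⁻¹ * y)

/-- The cyclically reduced length of `a`. -/
def cycLen {n : ℕ} (a : F n) : ℕ := sInf { m | ∃ h : F n, wlen (h⁻¹ * a * h) = m }

/-- The vertex set of the minimal `A`-invariant subtree `T_A` of the Cayley tree:
the union of the axes of the nontrivial elements of `A`. -/
def treeVerts {n : ℕ} (A : Subgroup (F n)) : Set (F n) :=
  { h | ∃ a ∈ A, a ≠ 1 ∧ wlen (h⁻¹ * a * h) = cycLen a }

/-- `γ_w ⊆ S`: every prefix of the reduced word of `w` lies in the vertex set `S`. -/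
def pathIn {n : ℕ} (w : F n) (S : Set (F n)) : Prop :=
  ∀ m ≤ wlen w, FreeGroup.mk ((rword w).take m) ∈ S

/-- An element is cyclically reduced if the last letter of its reduced word is not the
inverse of the first letter. -/
def CyclicallyReduced {n : ℕ} (w : F n) : Prop :=
  ∀ x y : Letter n, (rword w).head? = some x → (rword w).getLast? = some y → y ≠ linv x

/-- `v` is a length-one extension of `w`. -/
def LengthOneExt {n : ℕ} (w v : F n) : Prop :=
  ∃ b : Letter n, v = w * letterE b ∧ wlen v = wlen w + 1

/-- `a` is an extension of `w`: the reduced word of `w` is a proper prefix of that of `a`. -/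
def ExtensionOf {n : ℕ} (w a : F n) : Prop :=
  rword w <+: rword a ∧ wlen w < wlen a

/-- `g` is a proper power. -/
def IsProperPower {n : ℕ} (g : F n) : Prop := ∃ (h : F n) (k : ℕ), 2 ≤ k ∧ g = h ^ k

section System

variable {n r : ℕ} (A : Fin r → Subgroup (F n))

/-- `[B] ∈ 𝒜`, i.e. `B` is a conjugate of one of the subgroups of the system. -/
def InSystem (B : Subgroup (F n)) : Prop := ∃ (i : Fin r) (g : F n), B = conjSub g (A i)

/-- The family `A` represents a subgroup system: finite rank subgroups distinct
from `{1}` and `F n`. -/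
def IsSystem : Prop := (∀ i, (A i).FG) ∧ (∀ i, A i ≠ ⊥) ∧ (∀ i, A i ≠ ⊤)

/-- The subgroup system is malnormal. -/
def SystemMalnormal : Prop :=
  (∀ i, Malnormal (A i)) ∧
  ∀ B₁ B₂ : Subgroup (F n), InSystem A B₁ → InSystem A B₂ → B₁ ≠ B₂ → B₁ ⊓ B₂ = ⊥

/-- `g` is `𝒜`-peripheral: trivial or contained in a conjugate of one of the `A i`. -/
def Peripheral (g : F n) : Prop := g = 1 ∨ ∃ B, InSystem A B ∧ g ∈ B

/-- The diameter of the intersection of the trees of two distinct subgroups of the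
system is at most `L`. -/
def DiamBound (L : ℕ) : Prop :=
  ∀ B₁ B₂ : Subgroup (F n), InSystem A B₁ → InSystem A B₂ → B₁ ≠ B₂ →
    ∀ x ∈ treeVerts B₁ ∩ treeVerts B₂, ∀ y ∈ treeVerts B₁ ∩ treeVerts B₂, dist' x y ≤ L

/-- `B ∈ Γ_i`: `B` is a conjugate of `A i` whose tree contains the base point `1`. -/
def GammaMem (i : Fin r) (B : Subgroup (F n)) : Prop :=
  (∃ g : F n, B = conjSub g (A i)) ∧ (1 : F n) ∈ treeVerts B

/-- The finite set `𝒞` of words of length `L+2` whose path is contained in no tree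
`T_B` with `B ∈ Γ_i`, for every `i`. -/
def Ccal (L : ℕ) : Set (F n) :=
  { w | wlen w = L + 2 ∧ ∀ (i : Fin r) (B : Subgroup (F n)), GammaMem A i B →
      ¬ pathIn w (treeVerts B) }

/-- `F_n − 𝒜`: the words containing an element of `𝒞` as a contiguous subword. -/
def FmA (L : ℕ) : Set (F n) := { w | ∃ x ∈ Ccal A L, rword x <:+: rword w }

/-- `S_k`: words of length `k` not containing any element of `𝒞` as a subword. -/
def Sk (L k : ℕ) : Set (F n) := { w | wlen w = k ∧ w ∉ FmA A L }

end System

/-! ### The boundary of `F n` -/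

/-- An infinite reduced word. -/
def IsRed {n : ℕ} (ξ : ℕ → Letter n) : Prop := ∀ i, ξ (i + 1) ≠ linv (ξ i)

/-- The Gromov boundary `∂F_n`, realized as the space of infinite reduced words,
topologized as a subspace of the product space. -/
def Boundary (n : ℕ) : Type := { ξ : ℕ → Letter n // IsRed ξ }

instance {n : ℕ} : TopologicalSpace (Boundary n) :=
  instTopologicalSpaceSubtype

/-- The length-`m` prefix of a boundary point. -/
def bpre {n : ℕ} (ξ : Boundary n) (m : ℕ) : List (Letter n) :=
  (List.range m).map ξ.1

/-- The reduced word of `w` is a prefix of the infinite word `ξ`. -/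
def wordPrefixOf {n : ℕ} (w : F n) (ξ : Boundary n) : Prop :=
  bpre ξ (wlen w) = rword w

/-- The boundary (limit set) `∂A ⊆ ∂F_n` of a subgroup `A`. -/
def limitSet {n : ℕ} (A : Subgroup (F n)) : Set (Boundary n) :=
  { ξ | ∀ m : ℕ, ∃ a ∈ A, bpre ξ m <+: rword a }

/-- `ξ = g^{+∞}`: `ξ` is the limit of the reduced words of the powers of `g`. -/
def IsPosLimit {n : ℕ} (g : F n) (ξ : Boundary n) : Prop :=
  ∀ m : ℕ, ∃ N : ℕ, ∀ k ≥ N, bpre ξ m <+: rword (g ^ k)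

/-- The number of letters cancelled when concatenating the word `l` with the
infinite reduced word `ξ`. -/
def cancelLen {n : ℕ} (l : List (Letter n)) (ξ : ℕ → Letter n) : ℕ :=
  sSup { j | j ≤ l.length ∧ ∀ i < j, l.reverse[i]? = some (linv (ξ i)) }

/-- The sequence underlying the action of `g` on a boundary point: left multiplication
followed by cancellation. -/
def actSeq {n : ℕ} (g : F n) (ξ : ℕ → Letter n) : ℕ → Letter n :=
  fun m =>
    if h : m < (rword g).length - cancelLen (rword g) ξ then
      (rword g).get ⟨m, by omega⟩
    else ξ (m - ((rword g).length - cancelLen (rword g) ξ) + cancelLen (rword g) ξ)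

/-- The action of `F n` on its boundary: left multiplication followed by cancellation.
(The sequence `actSeq g ξ.1` is always reduced, so the first branch always applies.) -/
def bAct {n : ℕ} (g : F n) (ξ : Boundary n) : Boundary n :=
  if h : IsRed (actSeq g ξ.1) then ⟨actSeq g ξ.1, h⟩ else ξ

/-! ### The double boundary -/

/-- The diagonal action of `F n` on `Sym2 (∂F_n)`, whose restriction to the set of
non-diagonal classes is the action on the double boundary `∂²F_n`. -/
def dbAct {n : ℕ} (g : F n) : Sym2 (Boundary n) → Sym2 (Boundary n) := Sym2.map (bAct g)

/-- `∂²𝒜`: the classes `{ξ,η}` with both endpoints in `g·∂A_i = ∂(gA_ig⁻¹)` for some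
`i` and `g`. -/
def dblBndA {n r : ℕ} (A : Fin r → Subgroup (F n)) : Set (Sym2 (Boundary n)) :=
  { z | ∃ (i : Fin r) (g : F n) (ξ η : Boundary n), z = s(ξ, η) ∧
      ξ ∈ limitSet (conjSub g (A i)) ∧ η ∈ limitSet (conjSub g (A i)) }

/-- The double boundary `∂²(F_n,𝒜)` of `F n` relative to `𝒜`, as a subset of
`Sym2 (∂F_n)`: non-diagonal classes not lying in `∂²𝒜`. -/
def relSet {n r : ℕ} (A : Fin r → Subgroup (F n)) : Set (Sym2 (Boundary n)) :=
  { z | ¬ z.IsDiag } \ dblBndA A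

/-- The cylinder set `C(γ_w) ⊆ ∂²F_n` of the geodesic path from `1` to `w`. -/
def cylinder {n : ℕ} (w : F n) : Set (Sym2 (Boundary n)) :=
  { z | ∃ ξ η : Boundary n, z = s(ξ, η) ∧ ξ.1 0 ≠ η.1 0 ∧
      (wordPrefixOf w ξ ∨ wordPrefixOf w η) }

instance {n : ℕ} : MeasurableSpace (Sym2 (Boundary n)) := borel _

/-- The action of `g ∈ F n` on `∂²(F_n,𝒜)`. (The action of `F n` preserves
`∂²(F_n,𝒜)`, so the first branch always applies.) -/
def relAct {n r : ℕ} (A : Fin r → Subgroup (F n)) (g : F n) (z : ↥(relSet A)) :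
    ↥(relSet A) :=
  if h : dbAct g z.1 ∈ relSet A then ⟨dbAct g z.1, h⟩ else z

/-- The cylinder `C(γ_w)` as a subset of `∂²(F_n,𝒜)`. -/
def relCyl {n r : ℕ} (A : Fin r → Subgroup (F n)) (w : F n) : Set ↥(relSet A) :=
  Subtype.val ⁻¹' cylinder w

/-- The translated cylinder `g·C(γ_w)` as a subset of `∂²(F_n,𝒜)`. -/
def relCylG {n r : ℕ} (A : Fin r → Subgroup (F n)) (g w : F n) : Set ↥(relSet A) :=
  Subtype.val ⁻¹' (dbAct g '' cylinder w)

/-- A relative current on `(F_n,𝒜)`: an `F_n`-invariant Radon measure on the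
locally compact space `∂²(F_n,𝒜)` (finite on compacts, outer regular, inner regular
on open sets). -/
def IsRelCurrent {n r : ℕ} (A : Fin r → Subgroup (F n)) (μ : Measure ↥(relSet A)) : Prop :=
  (∀ (g : F n) (s : Set ↥(relSet A)), MeasurableSet s → μ (relAct A g ⁻¹' s) = μ s) ∧
  μ.Regular

/-- The `F_n`-orbit of a point of `Sym2 (∂F_n)`, inside `∂²(F_n,𝒜)`. -/
def orbitOf {n r : ℕ} (A : Fin r → Subgroup (F n)) (z : Sym2 (Boundary n)) :
    Set ↥(relSet A) :=
  { y | ∃ h : F n, (y : Sym2 (Boundary n)) = dbAct h z }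

/-! ### Quasiconvexity of finitely generated subgroups -/

/-- Free reduction of a word creates no new vertices along the corresponding path in the
Cayley tree. -/
lemma exists_prefix_of_red {α : Type*} {L₁ L₂ : List (α × Bool)} (h : FreeGroup.Red L₁ L₂)
    {p : List (α × Bool)} (hp : p <+: L₂) :
    ∃ q, q <+: L₁ ∧ FreeGroup.mk q = FreeGroup.mk p := by
  induction h generalizing p with
  | refl => exact ⟨p, hp, rfl⟩
  | @tail M N _ hstep ih =>
    obtain ⟨q, hq, hqp⟩ : ∃ q, q <+: M ∧ FreeGroup.mk q = FreeGroup.mk p := by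
      cases hstep with
      | @not u v x b =>
        rcases List.prefix_or_prefix_of_prefix hp (List.prefix_append u v) with h | ⟨w, rfl⟩
        · exact ⟨p, h.trans (List.prefix_append _ _), rfl⟩
        · rw [List.prefix_append_right_inj] at hp
          refine ⟨u ++ (x, b) :: (x, !b) :: w, ?_, Quot.sound FreeGroup.Red.Step.not⟩
          simpa using hp
    obtain ⟨s, hs, hsq⟩ := ih hq
    exact ⟨s, hs, hsq.trans hqp⟩

/-- A vertex on the geodesic from `1` to `x * y` lies on the geodesic from `1` to `x` or on
the translate by `x` of the geodesic from `1` to `y`. -/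
lemma prefix_toWord_mul {n : ℕ} {x y : F n} {p : List (Letter n)} (hp : p <+: rword (x * y)) :
    (∃ q, q <+: rword x ∧ FreeGroup.mk q = FreeGroup.mk p) ∨
      ∃ q, q <+: rword y ∧ x * FreeGroup.mk q = FreeGroup.mk p := by
  rw [rword, FreeGroup.toWord_mul] at hp
  obtain ⟨q, hq, hqp⟩ := exists_prefix_of_red FreeGroup.reduce.red hp
  rcases List.prefix_or_prefix_of_prefix hq (List.prefix_append _ _) with h | ⟨w, rfl⟩
  · exact Or.inl ⟨q, h, hqp⟩
  · rw [List.prefix_append_right_inj] at hq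
    refine Or.inr ⟨w, hq, ?_⟩
    rw [← hqp, ← FreeGroup.mul_mk, FreeGroup.mk_toWord]

/-- The vertices on the geodesic from `1` to `x`. -/
def prefixElts {n : ℕ} (x : F n) : Set (F n) :=
  { v | ∃ q, q <+: rword x ∧ FreeGroup.mk q = v }

lemma finite_prefixElts {n : ℕ} (x : F n) : (prefixElts x).Finite := by
  refine (((rword x).inits.toFinset.finite_toSet).image FreeGroup.mk).subset ?_
  rintro v ⟨q, hq, rfl⟩
  exact ⟨q, by simpa using hq, rfl⟩

/-- Quasiconvexity: all vertices on geodesics from `1` to points of a finitely generated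
subgroup `B` stay within bounded distance of `B`, so they lie in finitely many translates
`B * v`. -/
lemma exists_finite_quasiconvex {n : ℕ} {B : Subgroup (F n)} (hB : B.FG) :
    ∃ V : Set (F n), V.Finite ∧ ∀ a ∈ B, ∀ p, p <+: rword a →
      ∃ b ∈ B, ∃ v ∈ V, FreeGroup.mk p = b * v := by
  obtain ⟨S, rfl⟩ := hB
  let V : Set (F n) := {1} ∪ ⋃ s ∈ S, (prefixElts s ∪ prefixElts s⁻¹)
  refine ⟨V, ?_, ?_⟩
  · refine (Set.finite_singleton _).union (S.finite_toSet.biUnion fun s _ => ?_)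
    exact (finite_prefixElts s).union (finite_prefixElts _)
  · intro a ha
    have key : ∀ x ∈ Subgroup.closure (S : Set (F n)), ∀ y, prefixElts y ⊆ V →
        (∀ p, p <+: rword x → ∃ b ∈ Subgroup.closure (S : Set (F n)), ∃ v ∈ V,
          FreeGroup.mk p = b * v) →
        ∀ p, p <+: rword (x * y) → ∃ b ∈ Subgroup.closure (S : Set (F n)), ∃ v ∈ V,
          FreeGroup.mk p = b * v := by
      intro x hx y hy ih p hp
      rcases prefix_toWord_mul hp with ⟨q, hq, h⟩ | ⟨q, hq, h⟩
      · rw [← h]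
        exact ih q hq
      · exact ⟨x, hx, FreeGroup.mk q, hy ⟨q, hq, rfl⟩, h.symm⟩
    induction ha using Subgroup.closure_induction_right with
    | one =>
      intro p hp
      have : p = [] := by simpa [rword] using hp
      subst this
      exact ⟨1, one_mem _, 1, Or.inl rfl, by simp [FreeGroup.one_eq_mk]⟩
    | mul_right x hx y hy ih =>
      refine key x hx y (fun v hv => Or.inr ?_) ih
      exact Set.mem_biUnion hy (Or.inl hv)
    | mul_inv_cancel x hx y hy ih =>
      refine key x hx y⁻¹ (fun v hv => Or.inr ?_) ih
      exact Set.mem_biUnion hy (Or.inr hv)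

/-! ### The ray of powers of an element -/

/-- If `g = h c h⁻¹` with `c` cyclically reduced and no cancellation, `rayWord g k` is the
word `h c ^ k`; these words converge to `g^{+∞}`. -/
def rayWord {n : ℕ} (g : F n) (k : ℕ) : List (Letter n) :=
  FreeGroup.reduceCyclically.conjugator (rword g) ++
    (List.replicate k (FreeGroup.reduceCyclically (rword g))).flatten

lemma rword_pow_succ {n : ℕ} (g : F n) (k : ℕ) :
    rword (g ^ (k + 1)) = rayWord g (k + 1) ++
      FreeGroup.invRev (FreeGroup.reduceCyclically.conjugator (rword g)) := by
  rw [rword, FreeGroup.toWord_pow,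
    FreeGroup.reduceCyclically.reduce_flatten_replicate_succ FreeGroup.isReduced_toWord]
  rfl

lemma mk_rayWord_succ {n : ℕ} (g : F n) (k : ℕ) :
    FreeGroup.mk (rayWord g (k + 1)) =
      g ^ (k + 1) * FreeGroup.mk (FreeGroup.reduceCyclically.conjugator (rword g)) := by
  have h := congrArg FreeGroup.mk (rword_pow_succ g k)
  rw [rword, FreeGroup.mk_toWord, ← FreeGroup.mul_mk, ← FreeGroup.inv_mk] at h
  rw [h, inv_mul_cancel_right]

lemma rayWord_prefix_rword {n : ℕ} (g : F n) (k : ℕ) :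
    rayWord g (k + 1) <+: rword (g ^ (k + 1)) := by
  rw [rword_pow_succ]
  exact List.prefix_append _ _

lemma rayWord_mono {n : ℕ} (g : F n) {j k : ℕ} (hjk : j ≤ k) :
    rayWord g j <+: rayWord g k := by
  obtain ⟨d, rfl⟩ := Nat.exists_eq_add_of_le hjk
  rw [rayWord, rayWord, List.prefix_append_right_inj, List.replicate_add, List.flatten_append]
  exact List.prefix_append _ _

lemma le_length_rayWord {n : ℕ} {g : F n} (hg : g ≠ 1) (k : ℕ) :
    k ≤ (rayWord g k).length := by
  have hne : FreeGroup.reduceCyclically (rword g) ≠ [] := by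
    intro h
    apply hg
    have h1 := mk_rayWord_succ g 0
    rw [rayWord, h] at h1
    simpa using h1
  have := List.length_pos_iff.mpr hne
  simp only [rayWord, List.length_append, List.length_flatten, List.map_replicate,
    List.sum_replicate, smul_eq_mul]
  nlinarith

lemma prefix_rword_pow {n : ℕ} (g : F n) {j k : ℕ} (hjk : j + 1 ≤ k) :
    rayWord g (j + 1) <+: rword (g ^ k) := by
  obtain ⟨d, rfl⟩ := Nat.exists_eq_add_of_le' hjk
  exact (rayWord_mono g (by omega)).trans (rayWord_prefix_rword g (d + j))

lemma length_bpre {n : ℕ} (ξ : Boundary n) (m : ℕ) : (bpre ξ m).length = m := by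
  simp [bpre]

/-- The limit point `g^{+∞}` exists for every nontrivial `g`. -/
lemma exists_isPosLimit {n : ℕ} {g : F n} (hg : g ≠ 1) : ∃ ξ : Boundary n, IsPosLimit g ξ := by
  have hlen : ∀ i, i < (rayWord g (i + 1)).length := fun i => le_length_rayWord hg (i + 1)
  let ξ : ℕ → Letter n := fun i => (rayWord g (i + 1)).get ⟨i, hlen i⟩
  -- the `i`-th letter has stabilized as soon as the exponent exceeds `i`
  have hξ : ∀ k i, i < k → (rword (g ^ k))[i]? = some (ξ i) := by
    intro k i hik
    have h := prefix_rword_pow g (j := i) hik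
    exact (List.prefix_iff_getElem?.mp h) i (hlen i)
  have hred : IsRed ξ := by
    intro i hi
    have h0 := hξ (i + 2) i (by omega)
    have h1 := hξ (i + 2) (i + 1) (by omega)
    have hr : FreeGroup.IsReduced (rword (g ^ (i + 2))) := FreeGroup.isReduced_toWord
    rw [List.getElem?_eq_some_iff] at h0 h1
    obtain ⟨l0, h0⟩ := h0
    obtain ⟨l1, h1⟩ := h1
    have := List.isChain_iff_getElem.mp hr i l1
    rw [h0, h1, hi] at this
    simp [linv] at this
  let η : Boundary n := ⟨ξ, hred⟩
  refine ⟨η, fun m => ⟨m, fun k hk => ?_⟩⟩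
  rw [List.prefix_iff_getElem?]
  intro i hi
  have him : i < m := by rwa [length_bpre] at hi
  rw [hξ k i (by omega)]
  simp [bpre, η]

/-- The words `rayWord g (k + 1)` are prefixes of any limit of the powers of `g`. -/
lemma bpre_eq_rayWord {n : ℕ} {g : F n} {ξ : Boundary n} (hξ : IsPosLimit g ξ) (k : ℕ) :
    bpre ξ (rayWord g (k + 1)).length = rayWord g (k + 1) := by
  obtain ⟨N, hN⟩ := hξ (rayWord g (k + 1)).length
  have h1 := hN (max N (k + 1)) (le_max_left _ _)
  have h2 := prefix_rword_pow g (j := k) (le_max_right N (k + 1))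
  exact (List.prefix_of_prefix_length_le h1 h2 (by rw [length_bpre])).eq_of_length
    (length_bpre _ _)

/-! ### Properness at infinity -/

/-- If `g^{+∞}` lies in the limit set of a finitely generated subgroup `B`, some positive
power of `g` lies in `B`: two of the vertices `g ^ k * h` of the ray towards `g^{+∞}` lie in
the same coset `B * v`. -/
lemma exists_pow_mem {n : ℕ} {g : F n} {ξ : Boundary n} (hξ : IsPosLimit g ξ)
    {B : Subgroup (F n)} (hB : B.FG) (hmem : ξ ∈ limitSet B) : ∃ k, 0 < k ∧ g ^ k ∈ B := by
  obtain ⟨V, hV, hq⟩ := exists_finite_quasiconvex hB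
  have H : ∀ k : ℕ, ∃ v ∈ V, ∃ b ∈ B, FreeGroup.mk (rayWord g (k + 1)) = b * v := by
    intro k
    obtain ⟨a, ha, hpa⟩ := hmem (rayWord g (k + 1)).length
    rw [bpre_eq_rayWord hξ] at hpa
    obtain ⟨b, hb, v, hv, h⟩ := hq a ha _ hpa
    exact ⟨v, hv, b, hb, h⟩
  choose v hv b hb hvb using H
  obtain ⟨j, k, hjk, heq⟩ := hV.exists_lt_map_eq_of_forall_mem hv
  refine ⟨k - j, by omega, ?_⟩
  have hj := hvb j
  have hk := hvb k
  rw [mk_rayWord_succ] at hj hk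
  have hpow : g ^ (k - j) = b k * (b j)⁻¹ := by
    have e : g ^ (k + 1) = g ^ (k - j) * g ^ (j + 1) := by
      rw [← pow_add]
      congr 1
      omega
    rw [e, mul_assoc, hj, heq, ← mul_assoc] at hk
    exact eq_mul_inv_of_mul_eq (mul_right_cancel hk)
  rw [hpow]
  exact mul_mem (hb k) (inv_mem (hb j))

lemma mem_conjSub {n : ℕ} {x y : F n} {B : Subgroup (F n)} :
    y ∈ conjSub x B ↔ x⁻¹ * y * x ∈ B := by
  constructor
  · rintro ⟨b, hb, rfl⟩
    simpa [mul_assoc] using hb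
  · intro h
    exact ⟨_, h, by simp [mul_assoc]⟩

lemma fg_conjSub {n : ℕ} (x : F n) {B : Subgroup (F n)} (hB : B.FG) : (conjSub x B).FG := by
  obtain ⟨S, rfl⟩ := hB
  exact ⟨S.image (MulAut.conj x).toMonoidHom, by
    rw [conjSub, MonoidHom.map_closure, Finset.coe_image]⟩

/-- Malnormal subgroups of a free group are closed under taking roots. -/
lemma Malnormal.mem_of_pow_mem {n : ℕ} {B : Subgroup (F n)} (hB : Malnormal B) {g : F n}
    (hg : g ≠ 1) {k : ℕ} (hk : 0 < k) (h : g ^ k ∈ B) : g ∈ B := by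
  by_contra hgB
  have hmem : g ^ k ∈ conjSub g B ⊓ B := by
    refine ⟨mem_conjSub.mpr ?_, h⟩
    have : g⁻¹ * g ^ k * g = g ^ k := by
      rw [mul_assoc, ← pow_succ, pow_succ', inv_mul_cancel_left]
    rwa [this]
  rw [hB g hgB, Subgroup.mem_bot] at hmem
  exact hg ((pow_eq_one_iff_left (Nat.pos_iff_ne_zero.mp hk)).mp hmem)

lemma posLimit_mem_limitSet_iff {n r : ℕ} {A : Fin r → Subgroup (F n)}
    (hfg : ∀ i, (A i).FG) (hmal : ∀ i, Malnormal (A i)) {g : F n} (hg : g ≠ 1) :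
    (∃ ξ : Boundary n, IsPosLimit g ξ ∧ ∃ B, InSystem A B ∧ ξ ∈ limitSet B) ↔
      ∃ B, InSystem A B ∧ g ∈ B := by
  constructor
  · rintro ⟨ξ, hξ, B, ⟨i, x, rfl⟩, hB⟩
    obtain ⟨k, hk, hmem⟩ := exists_pow_mem hξ (fg_conjSub x (hfg i)) hB
    refine ⟨conjSub x (A i), ⟨i, x, rfl⟩, mem_conjSub.mpr ?_⟩
    have hconj : (x⁻¹ * g * x) ^ k = x⁻¹ * g ^ k * x := by
      simpa using conj_pow (a := x⁻¹) (b := g) (i := k)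
    refine (hmal i).mem_of_pow_mem ?_ hk (hconj ▸ mem_conjSub.mp hmem)
    intro h
    apply hg
    simpa using conj_eq_one_iff (a := x⁻¹) (b := g) |>.mp (by simpa using h)
  · rintro ⟨B, hB, hgB⟩
    obtain ⟨ξ, hξ⟩ := exists_isPosLimit hg
    refine ⟨ξ, hξ, B, hB, fun m => ?_⟩
    obtain ⟨N, hN⟩ := hξ m
    exact ⟨g ^ N, pow_mem hgB N, hN N le_rfl⟩

/-- A malnormal subgroup system is proper at infinity; in particular a nontrivial
element is peripheral iff its positive limit point lies in the boundary of a subgroup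
of the system. -/
theorem statement_2 (n r : ℕ) (hn : 2 ≤ n) (A : Fin r → Subgroup (F n))
    (hsys : IsSystem A) (hmal : SystemMalnormal A) :
    (∀ g : F n, g ≠ 1 →
        ((∃ ξ : Boundary n, IsPosLimit g ξ ∧ ∃ B, InSystem A B ∧ ξ ∈ limitSet B) ↔
          ∃ B, InSystem A B ∧ g ∈ B)) ∧
      ∀ g : F n, g ≠ 1 →
        (Peripheral A g ↔
          ∃ ξ : Boundary n, IsPosLimit g ξ ∧ ∃ B, InSystem A B ∧ ξ ∈ limitSet B) := by
  have key := fun (g : F n) (hg : g ≠ 1) => posLimit_mem_limitSet_iff hsys.1 hmal.1 hg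
  refine ⟨key, fun g hg => ?_⟩
  rw [key g hg, Peripheral, or_iff_right hg]

end RelCurr
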